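/- For all a, c ∈ ℂ, every δ with 0 < δ < 1, and every r > 0, one has (1/2π) ∫₀^{2π} log⁺ | 1 − c/(re^{iθ} + c − a) | dθ ≤ |c|^δ / ( δ(1−δ) r^δ ). -/

import Mathlib

open MeasureTheory Filter Topology Metric

noncomputable section

/-- Positive part of the logarithm: `log⁺ x = max (log x) 0`. -/
def logPlus (x : ℝ) : ℝ := max (Real.log x) 0

/-- The point `r e^{iθ}` on the circle of radius `r`. -/
def circ (r θ : ℝ) : ℂ := (r : ℂ) * Complex.exp (θ * Complex.I)

/-- Nevanlinna proximity function `m(r, f)`. -/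
def nevm (f : ℂ → ℂ) (r : ℝ) : ℝ :=
  (2 * Real.pi)⁻¹ * ∫ θ in (0:ℝ)..(2 * Real.pi), logPlus ‖f (circ r θ)‖

/-- Order of the pole of `f` at `x` (`0` if `f` extends analytically over `x`);
determined through the punctured neighbourhood of `x`. -/
def poleOrd (f : ℂ → ℂ) (x : ℂ) : ℕ :=
  sInf {n : ℕ | ∃ g : ℂ → ℂ, AnalyticAt ℂ g x ∧
    ∀ᶠ w in 𝓝[≠] x, (w - x) ^ n * f w = g w}

/-- Unintegrated counting function `n(r, f)`: number of poles of `f` in `|z| ≤ r`,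
counted with multiplicity. -/
def nevn (f : ℂ → ℂ) (r : ℝ) : ℕ := ∑ᶠ z ∈ closedBall (0:ℂ) r, poleOrd f z

/-- Integrated counting function `N(r, f)`. -/
def nevN (f : ℂ → ℂ) (r : ℝ) : ℝ :=
  (∫ t in (0:ℝ)..r, ((nevn f t : ℝ) - (nevn f 0 : ℝ)) / t) + (nevn f 0 : ℝ) * Real.log r

/-- Nevanlinna characteristic `T(r, f) = m(r, f) + N(r, f)`. -/
def nevT (f : ℂ → ℂ) (r : ℝ) : ℝ := nevm f r + nevN f r

/-- A subset of `(0, ∞)` has finite logarithmic measure: `∫_E dr/r < ∞`. -/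
def FinLogMeasure (E : Set ℝ) : Prop :=
  E ⊆ Set.Ioi 0 ∧ ∫⁻ r in E, ENNReal.ofReal r⁻¹ < ⊤

/-- `f` is a non-constant function. -/
def Nonconstant (f : ℂ → ℂ) : Prop := ¬ ∃ a : ℂ, ∀ z : ℂ, f z = a

/-- `f` has finite order: `limsup_{r→∞} log T(r,f) / log r < ∞`. -/
def FiniteOrder (f : ℂ → ℂ) : Prop :=
  IsBoundedUnder (· ≤ ·) atTop fun r : ℝ => Real.log (nevT f r) / Real.log r

end

/-!
Write `b = a - c`, so that the integrand is `log⁺ |1 - c / (z - b)|` on the circle `|z| = r`. The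
elementary bound `log⁺ |1 - w| ≤ |w| ^ δ / δ` reduces the claim to estimating the circle average of
`|z - b| ^ (-δ)`. Rotate so that `b` lies on the ray through `z₀ = r * exp (i * arg b)`. For a point
`z` of the circle at angle `t ∈ [-π, π]` from `z₀`, moving `b` along its ray onto the circle at most
doubles the distance to `z`, so `2 * |z - b| ≥ |z - z₀| = 2 * r * |sin (t / 2)| ≥ 2 * r * |t| / π`.
The average of `(r * |t| / π) ^ (-δ)` over `[-π, π]` is exactly `r ^ (-δ) / (1 - δ)`.
-/

open Real

lemma log_one_add_le_rpow_div {x δ : ℝ} (hx : 0 ≤ x) (hδ₀ : 0 < δ) (hδ₁ : δ ≤ 1) :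
    log (1 + x) ≤ x ^ δ / δ := by
  have hsub : (1 + x) ^ δ ≤ 1 + x ^ δ := by
    simpa only [one_rpow] using rpow_add_le_add_rpow zero_le_one hx hδ₀.le hδ₁
  rw [le_div_iff₀' hδ₀]
  calc δ * log (1 + x) = log ((1 + x) ^ δ) := (log_rpow (by positivity) δ).symm
    _ ≤ (1 + x) ^ δ - 1 := log_le_sub_one_of_pos (by positivity)
    _ ≤ x ^ δ := by linarith

lemma posLog_norm_one_sub_le {E : Type*} [SeminormedRing E] [NormOneClass E] (w : E) {δ : ℝ}
    (hδ₀ : 0 < δ) (hδ₁ : δ ≤ 1) : log⁺ ‖1 - w‖ ≤ ‖w‖ ^ δ / δ :=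
  calc log⁺ ‖1 - w‖ ≤ log⁺ (1 + ‖w‖) :=
        posLog_le_posLog (norm_nonneg _) (by simpa only [norm_one] using norm_sub_le 1 w)
    _ = log (1 + ‖w‖) :=
        posLog_eq_log ((le_add_of_nonneg_right (norm_nonneg w)).trans (le_abs_self _))
    _ ≤ ‖w‖ ^ δ / δ := log_one_add_le_rpow_div (norm_nonneg w) hδ₀ hδ₁

lemma norm_sub_le_two_mul_norm_sub_of_sameRay {E : Type*} [SeminormedAddCommGroup E]
    [NormedSpace ℝ E] {x y z : E} (hxy : ‖x‖ = ‖y‖) (hyz : SameRay ℝ y z) : ‖x - y‖ ≤ 2 * ‖x - z‖ :=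
  calc ‖x - y‖ ≤ ‖x - z‖ + ‖z - y‖ := norm_sub_le_norm_sub_add_norm_sub x z y
    _ = ‖x - z‖ + |‖x‖ - ‖z‖| := by rw [hyz.symm.norm_sub, hxy, abs_sub_comm]
    _ ≤ 2 * ‖x - z‖ := by linarith [abs_norm_sub_norm_le x z]

section CircleMap

variable (c b : ℂ) (R : ℝ)

lemma norm_circleMap_sub_circleMap (s t : ℝ) :
    ‖circleMap c R s - circleMap c R t‖ = 2 * |R| * |sin ((s - t) / 2)| := by
  have hfactor : circleMap c R s - circleMap c R t =
      R * Complex.exp (t * Complex.I) * (Complex.exp (Complex.I * (s - t : ℝ)) - 1) := by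
    have hexp : Complex.exp (s * Complex.I) =
        Complex.exp (t * Complex.I) * Complex.exp (Complex.I * (s - t : ℝ)) := by
      rw [← Complex.exp_add]
      push_cast
      ring_nf
    rw [circleMap, circleMap, hexp]
    ring
  rw [hfactor, norm_mul, norm_mul, Complex.norm_exp_ofReal_mul_I,
    Complex.norm_exp_I_mul_ofReal_sub_one, Complex.norm_real, norm_mul, norm_ofNat,
    norm_eq_abs, norm_eq_abs]
  ring

variable {R}

lemma sameRay_circleMap_arg_sub (hR : 0 ≤ R) :
    SameRay ℝ (circleMap c R (b - c).arg - c) (b - c) := by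
  have hcircle : circleMap c R (b - c).arg - c =
      R • Complex.exp ((b - c).arg * Complex.I) := by
    simp only [circleMap, add_sub_cancel_left, Complex.real_smul]
  have hpolar : b - c = ‖b - c‖ • Complex.exp ((b - c).arg * Complex.I) := by
    rw [Complex.real_smul, Complex.norm_mul_exp_arg_mul_I]
  rw [hcircle]
  nth_rw 2 [hpolar]
  exact ((SameRay.refl _).nonneg_smul_left hR).nonneg_smul_right (norm_nonneg _)

lemma mul_abs_le_norm_circleMap_arg_add_sub (hR : 0 ≤ R) {t : ℝ} (ht : |t| ≤ π) :
    R / π * |t| ≤ ‖circleMap c R ((b - c).arg + t) - b‖ := by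
  set θ := (b - c).arg
  have hchord : ‖circleMap c R (θ + t) - circleMap c R θ‖ = 2 * R * |sin (t / 2)| := by
    rw [norm_circleMap_sub_circleMap, add_sub_cancel_left, abs_of_nonneg hR]
  have hray : ‖circleMap c R (θ + t) - circleMap c R θ‖ ≤ 2 * ‖circleMap c R (θ + t) - b‖ := by
    have h := norm_sub_le_two_mul_norm_sub_of_sameRay
      (x := circleMap c R (θ + t) - c) (by simp only [circleMap_sub_center, norm_circleMap_zero])
      (sameRay_circleMap_arg_sub c b hR)
    simpa only [sub_sub_sub_cancel_right] using h
  have hjordan : 2 / π * |t / 2| ≤ |sin (t / 2)| :=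
    mul_abs_le_abs_sin (by rw [abs_div, abs_two]; linarith)
  calc R / π * |t| = R * (2 / π * |t / 2|) := by rw [abs_div, abs_two]; ring
    _ ≤ R * |sin (t / 2)| := by gcongr
    _ ≤ ‖circleMap c R (θ + t) - b‖ := by linarith

end CircleMap

section AbsRpow

variable {p : ℝ} (hp : -1 < p)
include hp

lemma intervalIntegrable_abs_rpow (a b : ℝ) :
    IntervalIntegrable (fun t : ℝ ↦ |t| ^ p) volume a b := by
  refine intervalIntegrable_of_even (fun t ↦ by rw [abs_neg]) fun x hx ↦ ?_
  refine (intervalIntegral.intervalIntegrable_rpow' hp).congr fun t ht ↦ ?_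
  rw [Set.uIoc_of_le hx.le] at ht
  simp only [abs_of_pos ht.1]

lemma integral_abs_rpow {x : ℝ} (hx : 0 ≤ x) :
    ∫ t in -x..x, |t| ^ p = 2 * (x ^ (p + 1) / (p + 1)) := by
  have hright : ∫ t in (0 : ℝ)..x, |t| ^ p = x ^ (p + 1) / (p + 1) := by
    have habs : ∫ t in (0 : ℝ)..x, |t| ^ p = ∫ t in (0 : ℝ)..x, t ^ p := by
      refine intervalIntegral.integral_congr fun t ht ↦ ?_
      rw [Set.uIcc_of_le hx] at ht
      simp only [abs_of_nonneg ht.1]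
    rw [habs, integral_rpow (Or.inl hp), zero_rpow (by linarith), sub_zero]
  have hleft : ∫ t in -x..0, |t| ^ p = ∫ t in (0 : ℝ)..x, |t| ^ p := by
    simpa only [abs_neg, neg_zero] using
      (intervalIntegral.integral_comp_neg (a := 0) (b := x) fun t : ℝ ↦ |t| ^ p).symm
  rw [← intervalIntegral.integral_add_adjacent_intervals (intervalIntegrable_abs_rpow hp (-x) 0)
    (intervalIntegrable_abs_rpow hp 0 x), hleft, hright, two_mul]

end AbsRpow

section Rotation

variable {E : Type*} [NormedAddCommGroup E] (f : ℂ → E) (c : ℂ) (R θ : ℝ)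

lemma circleIntegrable_iff_intervalIntegrable_add : CircleIntegrable f c R ↔
    IntervalIntegrable (fun t ↦ f (circleMap c R (θ + t))) volume (-π) π := by
  have hper : Function.Periodic (fun t ↦ f (circleMap c R t)) (2 * π) :=
    (periodic_circleMap c R).comp f
  have hwindow : IntervalIntegrable (fun t ↦ f (circleMap c R t)) volume (θ - π) (θ + π) ↔
      CircleIntegrable f c R := by
    refine ⟨fun h ↦ hper.intervalIntegrable two_pi_pos.ne' (t := θ - π) ?_ 0 (2 * π),
      fun h ↦ hper.intervalIntegrable two_pi_pos.ne' (t := 0) ?_ (θ - π) (θ + π)⟩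
    · rwa [show θ - π + 2 * π = θ + π by ring]
    · rwa [zero_add]
  rw [← hwindow, ← IntervalIntegrable.comp_add_left_iff (c := θ), sub_sub_cancel_left,
    add_sub_cancel_left]

lemma circleAverage_eq_integral_neg_pi_pi [NormedSpace ℝ E] : circleAverage f c R =
    (2 * π)⁻¹ • ∫ t in -π..π, f (circleMap c R (θ + t)) := by
  have hper : Function.Periodic (fun t ↦ f (circleMap c R (t + θ))) (2 * π) :=
    ((periodic_circleMap c R).add_const θ).comp f
  have hshift := hper.intervalIntegral_add_eq 0 (-π)
  rw [zero_add, show -π + 2 * π = π by ring] at hshift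
  simp only [circleAverage_eq_integral_add θ, hshift, add_comm θ]

end Rotation

section NormSubRpow

variable (c b : ℂ) {R p : ℝ} (hR : 0 < R) (hp : -1 < p) (hp₀ : p ≤ 0)
include hR hp₀

-- At `t = 0` the bound can fail for `p < 0`, since Lean's `0 ^ p` is `0`.
lemma norm_circleMap_arg_add_sub_rpow_le {t : ℝ} (ht : |t| ≤ π) (ht₀ : t ≠ 0) :
    ‖circleMap c R ((b - c).arg + t) - b‖ ^ p ≤ (R / π) ^ p * |t| ^ p := by
  rw [← mul_rpow (by positivity) (abs_nonneg t)]
  exact rpow_le_rpow_of_nonpos (by positivity)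
    (mul_abs_le_norm_circleMap_arg_add_sub c b hR.le ht) hp₀

include hp

lemma circleIntegrable_norm_sub_rpow : CircleIntegrable (fun z ↦ ‖z - b‖ ^ p) c R := by
  rw [circleIntegrable_iff_intervalIntegrable_add _ c R (b - c).arg]
  have hdom := (intervalIntegrable_abs_rpow hp (-π) π).const_mul ((R / π) ^ p)
  have hmeas : Measurable fun t ↦ ‖circleMap c R ((b - c).arg + t) - b‖ ^ p := by fun_prop
  refine hdom.mono_fun' hmeas.aestronglyMeasurable ?_
  filter_upwards [ae_restrict_mem measurableSet_uIoc,
    ae_restrict_of_ae (volume.ae_ne (0 : ℝ))] with t ht ht₀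
  rw [Set.uIoc_of_le (by linarith [pi_pos])] at ht
  rw [norm_of_nonneg (by positivity)]
  exact norm_circleMap_arg_add_sub_rpow_le c b hR hp₀ (abs_le.2 ⟨ht.1.le, ht.2⟩) ht₀

lemma circleAverage_norm_sub_rpow_le :
    circleAverage (fun z ↦ ‖z - b‖ ^ p) c R ≤ R ^ p / (p + 1) := by
  have hint := (circleIntegrable_iff_intervalIntegrable_add _ c R (b - c).arg).1
    (circleIntegrable_norm_sub_rpow c b hR hp hp₀)
  have hdom := (intervalIntegrable_abs_rpow hp (-π) π).const_mul ((R / π) ^ p)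
  have hmono : ∫ t in -π..π, ‖circleMap c R ((b - c).arg + t) - b‖ ^ p ≤
      ∫ t in -π..π, (R / π) ^ p * |t| ^ p := by
    refine intervalIntegral.integral_mono_ae_restrict (by linarith [pi_pos]) hint hdom ?_
    filter_upwards [ae_restrict_mem measurableSet_Icc,
      ae_restrict_of_ae (volume.ae_ne (0 : ℝ))] with t ht ht₀
    exact norm_circleMap_arg_add_sub_rpow_le c b hR hp₀ (abs_le.2 ht) ht₀
  calc circleAverage (fun z ↦ ‖z - b‖ ^ p) c R
      = (2 * π)⁻¹ * ∫ t in -π..π, ‖circleMap c R ((b - c).arg + t) - b‖ ^ p :=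
        circleAverage_eq_integral_neg_pi_pi _ c R _
    _ ≤ (2 * π)⁻¹ * ∫ t in -π..π, (R / π) ^ p * |t| ^ p := by gcongr
    _ = (2 * π)⁻¹ * ((R / π) ^ p * (2 * (π ^ (p + 1) / (p + 1)))) := by
        rw [intervalIntegral.integral_const_mul, integral_abs_rpow hp pi_pos.le]
    _ = R ^ p / (p + 1) := by
        rw [div_rpow hR.le pi_pos.le, rpow_add_one pi_ne_zero]
        field_simp

end NormSubRpow

lemma circleAverage_posLog_norm_one_sub_div_le (a b c : ℂ) {R δ : ℝ} (hR : 0 < R) (hδ₀ : 0 < δ)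
    (hδ₁ : δ < 1) :
    circleAverage (fun z ↦ log⁺ ‖1 - a / (z - b)‖) c R ≤ ‖a‖ ^ δ / (δ * (1 - δ) * R ^ δ) := by
  have hmer : MeromorphicOn (fun z ↦ 1 - a / (z - b)) (sphere c |R|) := fun z _ ↦ by fun_prop
  have hpow : CircleIntegrable (fun z ↦ ‖z - b‖ ^ (-δ)) c R :=
    circleIntegrable_norm_sub_rpow c b hR (by linarith) (by linarith)
  have hpoint (z : ℂ) : log⁺ ‖1 - a / (z - b)‖ ≤ ‖a‖ ^ δ / δ * ‖z - b‖ ^ (-δ) :=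
    calc log⁺ ‖1 - a / (z - b)‖ ≤ ‖a / (z - b)‖ ^ δ / δ := posLog_norm_one_sub_le _ hδ₀ hδ₁.le
      _ = ‖a‖ ^ δ / δ * ‖z - b‖ ^ (-δ) := by
        rw [norm_div, div_rpow (norm_nonneg _) (norm_nonneg _), rpow_neg (norm_nonneg _)]
        ring
  calc circleAverage (fun z ↦ log⁺ ‖1 - a / (z - b)‖) c R
      ≤ circleAverage (fun z ↦ ‖a‖ ^ δ / δ * ‖z - b‖ ^ (-δ)) c R :=
        circleAverage_mono hmer.circleIntegrable_posLog_norm (hpow.const_smul (a := ‖a‖ ^ δ / δ))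
          fun z _ ↦ hpoint z
    _ = ‖a‖ ^ δ / δ * circleAverage (fun z ↦ ‖z - b‖ ^ (-δ)) c R := by
        simp only [← smul_eq_mul, circleAverage_fun_smul]
    _ ≤ ‖a‖ ^ δ / δ * (R ^ (-δ) / (-δ + 1)) := by
        gcongr
        exact circleAverage_norm_sub_rpow_le c b hR (by linarith) (by linarith)
    _ = ‖a‖ ^ δ / (δ * (1 - δ) * R ^ δ) := by
        rw [rpow_neg hR.le, neg_add_eq_sub]
        field_simp

/-- For all `a, c ∈ ℂ`, `0 < δ < 1` and `r > 0`:
`(1/2π) ∫₀^{2π} log⁺|1 − c/(re^{iθ} + c − a)| dθ ≤ |c|^δ / (δ(1−δ) r^δ)`. -/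
theorem circle_integral_logPlus_bound' (a c : ℂ) (δ r : ℝ) (hδ0 : 0 < δ) (hδ1 : δ < 1)
    (hr : 0 < r) :
    (2 * Real.pi)⁻¹ * ∫ θ in (0:ℝ)..(2 * Real.pi), logPlus ‖1 - c / (circ r θ + c - a)‖ ≤
      ‖c‖ ^ δ / (δ * (1 - δ) * r ^ δ) := by
  have hcirc (θ : ℝ) : circ r θ + c - a = circleMap 0 r θ - (a - c) := by
    rw [circ, circleMap]
    ring
  have hlog (x : ℝ) : logPlus x = log⁺ x := max_comm _ _
  simpa only [hcirc, hlog, circleAverage, smul_eq_mul] using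
    circleAverage_posLog_norm_one_sub_div_le c (a - c) 0 hr hδ0 hδ1
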